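/- arXiv:2106.10301 — 2 statements merged into one kernel-verified Lean document; each statement's English description precedes it below -/
import Mathlib

section
/- The Pacman cellular automaton (X,T) is diam-mean sensitive: there exists ε > 0 such that for every x ∈ X and every δ > 0, limsup_{n→∞} (1/n) Σ_{i=1}^{n} diam(T^i B_δ(x)) > ε, where B_δ(x) is the open ball of radius δ around x. -/
/-!
For every ball `B_δ(x)` the diameter of `T^t B_δ(x)` equals `1` for all large `t`, so the averages
tend to `1`.

Let `[-m, m]` be a window such that all points agreeing with `x` on it lie in the ball, and let `z`
be the point that agrees with `x` on the window, has a door at `m + 1`, and is empty elsewhere.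
Doors never move. A ghost going left bounces off the next door as a pacman, the pacman turns into a
keymaster at the next door on its right, and the keymaster goes left through the door that stopped
the ghost. Thus each particle makes its way to the left, and interactions only destroy particles.
This is quantified by a height function that strictly decreases from a particle to its descendant
(`exists_parent`); it follows that `T^t z` consists of empty space and empty doors on `[-m, ∞)`
once `t` is large (`eventually_clean`).

Now let `y` be `z` with a keymaster added at distance `i` to the right of the door at `m + 1`. It
arrives at this door at time `i` without having influenced anything (`pacT_iterate_update`). If `i`
is large, it then is the only particle right of `-m`, and by the same height function it reaches the
origin after a further time `c` that does not depend on `i` (`lone_reaches`). So `T^(i+c) y` has a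
particle at the origin and `T^(i+c) z` has none. As `i` is arbitrary, this gives diameter `1` at all
large times (`eventually_diam`).
-/

/-- The six-letter alphabet of the Pacman cellular automaton:
`O` = empty space, `D` = empty door, `P` = pacman, `G` = ghost,
`K` = keymaster ghost, `E` = door with ghost. -/
inductive PacSym : Type
  | O | D | P | G | K | E
  deriving DecidableEq

open PacSym

/-- The radius-1 local rule `f(a,b,c)` of the Pacman cellular automaton. -/
def pacRule (a b c : PacSym) : PacSym :=
  if ((a = O ∨ a = G ∨ a = K) ∧
        (((b = O ∨ b = G ∨ b = K) ∧ (c = O ∨ c = D ∨ c = P)) ∨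
          (b = P ∧ ¬(c = D ∨ c = E)))) ∨
      ((a = D ∨ a = E) ∧
        (((b = O ∨ b = K) ∧ (c = O ∨ c = D ∨ c = P)) ∨
          (b = P ∧ ¬(c = D ∨ c = E)))) then O
  else if (b = D ∨ b = E) ∧ ¬(c = K ∨ c = E) then D
  else if ((a = O ∨ a = G ∨ a = K) ∧ (b = O ∨ b = G ∨ b = K) ∧ (c = G ∨ c = E)) ∨
      ((a = D ∨ a = E) ∧ (b = O ∨ b = K) ∧ c = E) then G
  else if (c = K ∧ (((a = O ∨ a = G ∨ a = K) ∧ (b = O ∨ b = G ∨ b = K)) ∨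
        ((a = D ∨ a = E) ∧ (b = O ∨ b = K)))) ∨
      (a = P ∧ ¬(b = D ∨ b = E) ∧ (c = D ∨ c = E)) ∨
      (b = P ∧ (c = D ∨ c = E)) then K
  else if (a = D ∧ (((b = O ∨ b = K) ∧ c = G) ∨ b = G)) ∨
      (a = P ∧ ¬(b = D ∨ b = E) ∧ ¬(c = D ∨ c = E)) then P
  else if (b = D ∨ b = E) ∧ (c = K ∨ c = E) then E
  else O

/-- The full shift `X = A^ℤ` over the Pacman alphabet. -/
abbrev PacX : Type := ℤ → PacSym

/-- The Pacman cellular automaton `T : X → X`, `(Tx)_i = f(x_{i-1}, x_i, x_{i+1})`. -/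
def pacT (x : PacX) : PacX := fun i => pacRule (x (i - 1)) (x i) (x (i + 1))

open Classical in
/-- The metric `d(x,y) = 2^{-min{|j| : x_j ≠ y_j}}` for `x ≠ y`, and `0` otherwise. -/
noncomputable def pdist (x y : PacX) : ℝ :=
  if x = y then 0
  else (2 : ℝ) ^ (-((sInf {n : ℕ | ∃ j : ℤ, j.natAbs = n ∧ x j ≠ y j} : ℕ) : ℤ))

/-- The open ball `B_δ(x) = {y : d(x,y) < δ}`. -/
def pball (x : PacX) (δ : ℝ) : Set PacX := {y | pdist x y < δ}

/-- The diameter of a set: `diam S = sup {d(a,b) : a, b ∈ S}`. -/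
noncomputable def pdiam (S : Set PacX) : ℝ := sSup (Set.image2 pdist S S)

/-- The point `x^{w,i} = ⋯0 0.w D 0^i K 0 0⋯`. -/
def xPt (w : List PacSym) (i : ℕ) : PacX := fun j =>
  if 0 ≤ j ∧ j < (w.length : ℤ) then w.getD j.toNat O
  else if j = (w.length : ℤ) then D
  else if j = (w.length : ℤ) + 1 + (i : ℤ) then K
  else O

/-- The point `x^{w} = ⋯0 0.w D 0 0⋯`. -/
def yPt (w : List PacSym) : PacX := fun j =>
  if 0 ≤ j ∧ j < (w.length : ℤ) then w.getD j.toNat O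
  else if j = (w.length : ℤ) then D
  else O

/-- The doors (empty or occupied); the set of their positions never changes. -/
def PacSym.isDoor : PacSym → Bool
  | D => true
  | E => true
  | _ => false

/-- The symbols that carry a particle: everything except empty space and empty doors. -/
def PacSym.isPart : PacSym → Bool
  | O => false
  | D => false
  | _ => true

/-! ### The local rule -/

theorem isDoor_pacRule (a b c : PacSym) : (pacRule a b c).isDoor = b.isDoor := by
  cases a <;> cases b <;> cases c <;> rfl

theorem pacRule_eq_G {a b c : PacSym} (h : pacRule a b c = G) :
    b.isDoor = false ∧ (c = G ∨ c = E) := by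
  revert h; cases a <;> cases b <;> cases c <;> decide

theorem pacRule_eq_K {a b c : PacSym} (h : pacRule a b c = K) :
    b.isDoor = false ∧ (c = K ∨ (c.isDoor = true ∧ (a = P ∨ b = P))) := by
  revert h; cases a <;> cases b <;> cases c <;> decide

theorem pacRule_eq_P {a b c : PacSym} (h : pacRule a b c = P) :
    b.isDoor = false ∧ ((a.isDoor = true ∧ (b = G ∨ c = G)) ∨ a = P) := by
  revert h; cases a <;> cases b <;> cases c <;> decide

theorem pacRule_eq_E {a b c : PacSym} (h : pacRule a b c = E) :
    b.isDoor = true ∧ (c = K ∨ c = E) := by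
  revert h; cases a <;> cases b <;> cases c <;> decide

theorem pacRule_left {a b : PacSym} (c : PacSym) (ha : a = O ∨ a = G ∨ a = K)
    (hb : b = O ∨ b = G ∨ b = K) :
    pacRule a b c = O ∨ pacRule a b c = G ∨ pacRule a b c = K := by
  revert ha hb; cases a <;> cases b <;> cases c <;> decide

/-! ### The height of a particle -/

/-- A quantity attached to a particle `s` at position `i` that decreases by at least `1` in every time
step, all doors being in `[lo, M]`. Here `V i` is `2 * M + 4 - 2 * lo` times the number of doors left of `i`,
so that crossing a door leftwards pays for the bounce (ghost, pacman, keymaster) that follows.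
The value at symbols carrying no particle is irrelevant. -/
def height (V : ℤ → ℤ) (lo M : ℤ) : PacSym → ℤ → ℤ
  | K, i => V i + i
  | P, i => V i + (2 * M + 2) - i
  | G, i => V i + (2 * M + 4 - 2 * lo) + i
  | E, i => V i + (2 * M + 4 - 2 * lo) + i
  | _, _ => 0

/-- The data of a finite arrangement of doors in `[lo, M]`, with a door at `M`, together with the
weighted door-counting function `V`. -/
structure Doors (dr : ℤ → Bool) (V : ℤ → ℤ) (lo M : ℤ) : Prop where
  lo_neg : lo < 0
  M_pos : 0 < M
  lo_le : ∀ j, dr j = true → lo ≤ j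
  le_M : ∀ j, dr j = true → j ≤ M
  last : dr M = true
  succ : ∀ i, V (i + 1) = V i + if dr i then 2 * M + 4 - 2 * lo else 0
  nonneg : ∀ i, 0 ≤ V i

theorem Doors.exists (dr : ℤ → Bool) (lo M : ℤ) (h0 : lo < 0) (h1 : 0 < M)
    (h2 : ∀ j, dr j = true → lo ≤ j) (h3 : ∀ j, dr j = true → j ≤ M) (h4 : dr M = true) :
    ∃ V, Doors dr V lo M := by
  refine ⟨fun i => (2 * M + 4 - 2 * lo) * (((Finset.Ico lo i).filter (fun j => dr j)).card : ℤ),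
    h0, h1, h2, h3, h4, fun i => ?_, fun i => mul_nonneg (by omega) (by positivity)⟩
  rcases lt_or_ge i lo with hi | hi
  · have hd : dr i = false := by
      by_contra h
      have := h2 i (by simpa using h)
      omega
    simp [Finset.Ico_eq_empty_of_le hi.le, Finset.Ico_eq_empty_of_le (show i + 1 ≤ lo by omega), hd]
  · have hs : Finset.Ico lo (i + 1) = insert i (Finset.Ico lo i) := by
      ext j; simp only [Finset.mem_Ico, Finset.mem_insert]; omega
    simp only [hs, Finset.filter_insert]
    cases hd : dr i
    · simp
    · simp [mul_add]

/-- Every particle has a parent: a particle of strictly larger height one step earlier. -/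
theorem exists_parent {dr : ℤ → Bool} {V : ℤ → ℤ} {lo M : ℤ} (hD : Doors dr V lo M) {y : PacX}
    (hy : ∀ j, (y j).isDoor = dr j) (i : ℤ) (hi : (pacT y i).isPart = true) :
    ∃ j, (y j).isPart = true ∧ height V lo M (pacT y i) i + 1 ≤ height V lo M (y j) j := by
  have hV := hD.succ i
  have hV' := hD.succ (i - 1)
  rw [sub_add_cancel] at hV'
  have h0 := hD.lo_neg
  have h1 := hD.M_pos
  have dl := hD.lo_le (i - 1)
  have dM := hD.le_M (i + 1)
  have e0 := hy i
  have e1 := hy (i + 1)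
  have e2 := hy (i - 1)
  rw [← e0] at hV
  rw [← e2] at hV' dl
  rw [← e1] at dM
  have hT : pacT y i = pacRule (y (i - 1)) (y i) (y (i + 1)) := rfl
  cases hs : pacT y i
  case O => simp [hs, PacSym.isPart] at hi
  case D => simp [hs, PacSym.isPart] at hi
  case G =>
    obtain ⟨hb, hc⟩ := pacRule_eq_G (hT ▸ hs)
    refine ⟨i + 1, ?_⟩
    rw [hb] at hV
    rcases hc with hc | hc <;> simp [hc, height, PacSym.isPart] at * <;> omega
  case K =>
    obtain ⟨hb, hc⟩ := pacRule_eq_K (hT ▸ hs)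
    rw [hb] at hV
    rcases hc with hc | ⟨hc, ha | hb'⟩
    · refine ⟨i + 1, ?_⟩
      simp [hc, height, PacSym.isPart] at *; omega
    · refine ⟨i - 1, ?_⟩
      have := dM hc
      simp [ha, height, PacSym.isPart, PacSym.isDoor] at *; omega
    · refine ⟨i, ?_⟩
      have := dM hc
      simp [hb', height, PacSym.isPart] at *; omega
  case P =>
    obtain ⟨hb, hc⟩ := pacRule_eq_P (hT ▸ hs)
    rw [hb] at hV
    rcases hc with ⟨ha, hc | hc⟩ | ha
    · refine ⟨i, ?_⟩
      have := dl ha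
      simp [hc, height, PacSym.isPart] at *; omega
    · refine ⟨i + 1, ?_⟩
      have := dl ha
      simp [hc, height, PacSym.isPart] at *; omega
    · refine ⟨i - 1, ?_⟩
      simp [ha, height, PacSym.isPart, PacSym.isDoor] at *; omega
  case E =>
    obtain ⟨hb, hc⟩ := pacRule_eq_E (hT ▸ hs)
    refine ⟨i + 1, ?_⟩
    rw [hb] at hV
    rcases hc with hc | hc <;> simp [hc, height, PacSym.isPart] at * <;> omega

theorem isDoor_iterate (y : PacX) (t : ℕ) (j : ℤ) :
    (pacT^[t] y j).isDoor = (y j).isDoor := by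
  induction t with
  | zero => rfl
  | succ t ih =>
    rw [Function.iterate_succ_apply', ← ih]
    exact isDoor_pacRule _ _ _

theorem height_iterate_le {dr : ℤ → Bool} {V : ℤ → ℤ} {lo M : ℤ} (hD : Doors dr V lo M) {y : PacX}
    (hy : ∀ j, (y j).isDoor = dr j) {B : ℤ}
    (hB : ∀ j, (y j).isPart = true → height V lo M (y j) j ≤ B) (t : ℕ) :
    ∀ j, (pacT^[t] y j).isPart = true → height V lo M (pacT^[t] y j) j ≤ B - t := by
  induction t with
  | zero => simpa using hB
  | succ t ih =>
    intro j hj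
    rw [Function.iterate_succ_apply'] at hj ⊢
    obtain ⟨k, hk, hle⟩ := exists_parent hD (fun j => (isDoor_iterate y t j).trans (hy j)) j hj
    have := ih k hk
    push_cast
    omega

/-! ### A single particle among empty doors -/

/-- The configuration with all doors in `dr` empty and no particles. -/
def bg (dr : ℤ → Bool) (j : ℤ) : PacSym := if dr j then D else O

/-- To the right of `lo`, the configuration `y` consists of empty doors and the single particle `s`
at position `p`; to the left of `lo` there may be left-moving ghosts. -/
def Lone (dr : ℤ → Bool) (lo p : ℤ) (s : PacSym) (y : PacX) : Prop :=
  ∀ j, (j < lo ∧ (y j = O ∨ y j = G ∨ y j = K)) ∨ (lo ≤ j ∧ y j = if j = p then s else bg dr j)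

/-- A state `s` at position `p` from which the single particle does not escape to the right. -/
def Good (dr : ℤ → Bool) (M p : ℤ) (s : PacSym) : Prop :=
  s.isPart = true ∧ s.isDoor = dr p ∧ (s = K ∨ p ≤ M)

/-- Away from the particle nothing happens, so only the cells near it have to be checked. -/
theorem lone_of_local {dr : ℤ → Bool} {lo p p' : ℤ} {s s' : PacSym} {y : PacX}
    (hlo : lo < 0) (hp : 0 < p) (hp' : p - 1 ≤ p' ∧ p' ≤ p + 1)
    (h : ∀ j, p - 1 ≤ j → j ≤ p + 1 →
      pacRule (if j - 1 = p then s else bg dr (j - 1)) (if j = p then s else bg dr j)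
        (if j + 1 = p then s else bg dr (j + 1)) = if j = p' then s' else bg dr j)
    (hy : Lone dr lo p s y) : Lone dr lo p' s' (pacT y) := by
  intro j
  have ha := hy (j - 1)
  have hb := hy j
  have hc := hy (j + 1)
  have hT : pacT y j = pacRule (y (j - 1)) (y j) (y (j + 1)) := rfl
  rcases lt_or_ge j lo with hj | hj
  · left
    refine ⟨hj, hT ▸ pacRule_left _ ?_ ?_⟩
    · rcases ha with ha | ha
      · exact ha.2
      · omega
    · rcases hb with hb | hb
      · exact hb.2
      · omega
  · right
    refine ⟨hj, ?_⟩
    by_cases hn : p - 1 ≤ j ∧ j ≤ p + 1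
    · rw [← h j hn.1 hn.2, hT]
      congr 1
      · rcases ha with ha | ha
        · omega
        · exact ha.2
      · rcases hb with hb | hb
        · omega
        · exact hb.2
      · rcases hc with hc | hc
        · omega
        · exact hc.2
    · have e1 : j - 1 ≠ p := by omega
      have e2 : j ≠ p := by omega
      have e3 : j + 1 ≠ p := by omega
      have e4 : j ≠ p' := by omega
      simp only [e1, e2, e3, e4, if_false, bg] at ha hb hc ⊢
      replace hb : y j = if dr j then D else O := by
        rcases hb with hb | hb
        · omega
        · exact hb.2
      replace hc : y (j + 1) = if dr (j + 1) then D else O := by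
        rcases hc with hc | hc
        · omega
        · exact hc.2
      rw [hT, hb, hc]
      rcases ha with ⟨-, ha | ha | ha⟩ | ⟨-, ha⟩
      all_goals
        rw [ha]
        cases dr (j - 1) <;> cases dr j <;> cases dr (j + 1) <;> rfl

/-- The single particle moves at most one step to the left, and loses height. -/
theorem lone_step {dr : ℤ → Bool} {V : ℤ → ℤ} {lo M : ℤ} (hD : Doors dr V lo M) {p : ℤ}
    {s : PacSym} (hp : 0 < p) (hg : Good dr M p s) :
    ∃ p' s', 0 ≤ p' ∧ Good dr M p' s' ∧ height V lo M s' p' < height V lo M s p ∧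
      ∀ y, Lone dr lo p s y → Lone dr lo p' s' (pacT y) := by
  obtain ⟨hs, hd, hM⟩ := hg
  have h0 := hD.lo_neg
  have h1 := hD.M_pos
  have hV := hD.succ p
  have hV' := hD.succ (p - 1)
  rw [sub_add_cancel] at hV'
  have last := hD.last
  have hle := hD.le_M (p + 1)
  have hle2 := hD.le_M (p + 2)
  have hne : ∀ q, dr q = false → q ≠ M := by
    rintro q hq rfl
    simp [last] at hq
  have n1 : p ≠ p - 1 := by omega
  have n2 : p + 1 ≠ p - 1 := by omega
  have n3 : p - 1 ≠ p + 1 := by omega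
  have n4 : p ≠ p + 1 := by omega
  -- Reduces the evolution claim to the three cells around `p`.
  have key : ∀ p' s', (p - 1 ≤ p' ∧ p' ≤ p + 1) →
      pacRule (bg dr (p - 2)) (bg dr (p - 1)) s = (if p - 1 = p' then s' else bg dr (p - 1)) →
      pacRule (bg dr (p - 1)) s (bg dr (p + 1)) = (if p = p' then s' else bg dr p) →
      pacRule s (bg dr (p + 1)) (bg dr (p + 2)) = (if p + 1 = p' then s' else bg dr (p + 1)) →
      ∀ y, Lone dr lo p s y → Lone dr lo p' s' (pacT y) := by
    intro p' s' hp' k1 k2 k3 y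
    refine lone_of_local h0 hp hp' fun j hj1 hj2 => ?_
    obtain rfl | rfl | rfl : j = p - 1 ∨ j = p ∨ j = p + 1 := by omega
    · simpa [show p - 1 - 1 = p - 2 by ring, show p - 2 ≠ p by omega] using k1
    · simpa using k2
    · simpa [show p + 1 + 1 = p + 2 by ring, show p + 2 ≠ p by omega] using k3
  cases s
  case O => simp [PacSym.isPart] at hs
  case D => simp [PacSym.isPart] at hs
  case K =>
    replace hd : dr p = false := hd.symm
    cases d1 : dr (p - 1)
    · refine ⟨p - 1, K, by omega, ⟨rfl, by rw [d1]; rfl, .inl rfl⟩, ?_, key _ _ (by omega) ?_ ?_ ?_⟩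
      · simp [height, d1] at *; omega
      all_goals
        simp only [bg, hd, d1]
        cases dr (p - 2) <;> cases dr (p + 1) <;> cases dr (p + 2) <;> simp [pacRule, n1, n2]
    · have := hD.le_M _ d1
      refine ⟨p - 1, E, by omega, ⟨rfl, by rw [d1]; rfl, .inr this⟩, ?_, key _ _ (by omega) ?_ ?_ ?_⟩
      · simp [height, d1] at *; omega
      all_goals
        simp only [bg, hd, d1]
        cases dr (p - 2) <;> cases dr (p + 1) <;> cases dr (p + 2) <;> simp [pacRule, n1, n2]
  case E =>
    replace hd : dr p = true := hd.symm
    have hM := hD.le_M _ hd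
    cases d1 : dr (p - 1)
    · refine ⟨p - 1, G, by omega, ⟨rfl, by rw [d1]; rfl, .inr (by omega)⟩, ?_,
        key _ _ (by omega) ?_ ?_ ?_⟩
      · simp [height, d1] at *; omega
      all_goals
        simp only [bg, hd, d1]
        cases dr (p - 2) <;> cases dr (p + 1) <;> cases dr (p + 2) <;> simp [pacRule, n1, n2]
    · refine ⟨p - 1, E, by omega, ⟨rfl, by rw [d1]; rfl, .inr (by omega)⟩, ?_,
        key _ _ (by omega) ?_ ?_ ?_⟩
      · simp [height, d1] at *; omega
      all_goals
        simp only [bg, hd, d1]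
        cases dr (p - 2) <;> cases dr (p + 1) <;> cases dr (p + 2) <;> simp [pacRule, n1, n2]
  case G =>
    replace hd : dr p = false := hd.symm
    replace hM : p ≤ M := by simpa using hM
    cases d1 : dr (p - 1)
    · cases d2 : dr (p - 2)
      · refine ⟨p - 1, G, by omega, ⟨rfl, by rw [d1]; rfl, .inr (by omega)⟩, ?_,
          key _ _ (by omega) ?_ ?_ ?_⟩
        · simp [height, d1] at *; omega
        all_goals
          simp only [bg, hd, d1, d2]
          cases dr (p + 1) <;> cases dr (p + 2) <;> simp [pacRule, n1, n2]
      · refine ⟨p - 1, P, by omega, ⟨rfl, by rw [d1]; rfl, .inr (by omega)⟩, ?_,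
          key _ _ (by omega) ?_ ?_ ?_⟩
        · simp [height, d1] at *; omega
        all_goals
          simp only [bg, hd, d1, d2]
          cases dr (p + 1) <;> cases dr (p + 2) <;> simp [pacRule, n1, n2]
    · refine ⟨p, P, by omega, ⟨rfl, by rw [hd]; rfl, .inr (by omega)⟩, ?_,
        key _ _ (by omega) ?_ ?_ ?_⟩
      · simp [height, d1] at *; omega
      all_goals
        simp only [bg, hd, d1]
        cases dr (p - 2) <;> cases dr (p + 1) <;> cases dr (p + 2) <;> simp [pacRule]
  case P =>
    replace hd : dr p = false := hd.symm
    replace hM : p ≤ M := by simpa using hM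
    have hpM := hne p hd
    cases d1 : dr (p + 1)
    · cases d2 : dr (p + 2)
      · refine ⟨p + 1, P, by omega, ⟨rfl, by rw [d1]; rfl, .inr (by omega)⟩, ?_,
          key _ _ (by omega) ?_ ?_ ?_⟩
        · simp [height, hd] at *; omega
        all_goals
          simp only [bg, hd, d1, d2]
          cases dr (p - 1) <;> cases dr (p - 2) <;> simp [pacRule, n3, n4]
      · have := hle2 d2
        refine ⟨p + 1, K, by omega, ⟨rfl, by rw [d1]; rfl, .inl rfl⟩, ?_,
          key _ _ (by omega) ?_ ?_ ?_⟩
        · simp [height, hd] at *; omega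
        all_goals
          simp only [bg, hd, d1, d2]
          cases dr (p - 1) <;> cases dr (p - 2) <;> simp [pacRule, n3, n4]
    · have := hle d1
      refine ⟨p, K, by omega, ⟨rfl, by rw [hd]; rfl, .inl rfl⟩, ?_,
        key _ _ (by omega) ?_ ?_ ?_⟩
      · simp [height, hd] at *; omega
      all_goals
        simp only [bg, hd, d1]
        cases dr (p - 2) <;> cases dr (p - 1) <;> cases dr (p + 2) <;> simp [pacRule]

/-- The single particle reaches the origin, at a time depending only on its initial state. -/
theorem lone_reaches {dr : ℤ → Bool} {V : ℤ → ℤ} {lo M : ℤ} (hD : Doors dr V lo M) (n : ℕ) :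
    ∀ (p : ℤ) (s : PacSym), 0 ≤ p → Good dr M p s → height V lo M s p < n →
      ∃ c : ℕ, ∀ y, Lone dr lo p s y → (pacT^[c] y 0).isPart = true := by
  induction n with
  | zero =>
    intro p s hp hg hh
    exfalso
    obtain ⟨hs, -, hM⟩ := hg
    have h0 := hD.lo_neg
    have h1 := hD.M_pos
    have := hD.nonneg p
    cases s <;> simp [height, PacSym.isPart] at * <;> omega
  | succ n ih =>
    intro p s hp hg hh
    rcases hp.eq_or_lt with rfl | hp
    · refine ⟨0, fun y hy => ?_⟩
      have h0 := hD.lo_neg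
      rcases hy 0 with h | h
      · omega
      · rw [Function.iterate_zero, id, h.2, if_pos rfl]
        exact hg.1
    · obtain ⟨p', s', hp', hg', hlt, hstep⟩ := lone_step hD hp hg
      obtain ⟨c, hc⟩ := ih p' s' hp' hg' (by push_cast at hh; omega)
      refine ⟨c + 1, fun y hy => ?_⟩
      rw [Function.iterate_succ_apply]
      exact hc _ (hstep y hy)

/-! ### A keymaster arriving from the right -/

/-- As long as it is right of the last door, a keymaster added to a configuration that is empty
there travels left at unit speed and does not influence anything else. -/
theorem pacT_update {z : PacX} {M q : ℤ} (hM : (z M).isDoor = true) (hz : ∀ j, M < j → z j = O) (hq : M + 1 < q) :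
    pacT (Function.update z q K) = Function.update (pacT z) (q - 1) K := by
  have z0 := hz q (by omega)
  have z1 := hz (q - 1) (by omega)
  have z2 := hz (q + 1) (by omega)
  have z3 := hz (q + 2) (by omega)
  funext j
  simp only [pacT, Function.update_apply]
  by_cases h1 : j = q - 1
  · subst h1
    have ha : z (q - 1 - 1) = O ∨ (z (q - 1 - 1)).isDoor = true := by
      rcases eq_or_ne (q - 1 - 1) M with h | h
      · right; rw [h]; exact hM
      · left; exact hz _ (by omega)
    simp only [sub_add_cancel, if_true, show q - 1 - 1 ≠ q by omega, show q - 1 ≠ q by omega,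
      if_false, z1]
    revert ha
    cases z (q - 1 - 1) <;> decide
  by_cases h2 : j = q
  · subst h2
    simp [z0, z1, z2, pacRule, h1]
  by_cases h3 : j = q + 1
  · subst h3
    rw [show q + 1 + 1 = q + 2 by ring]
    simp [z0, z2, z3, pacRule, show q + 2 ≠ q by omega, show q + 1 ≠ q - 1 by omega]
  · simp [h1, h2, show j - 1 ≠ q by omega, show j + 1 ≠ q by omega]

/-- Nothing ever appears to the right of the last door. -/
theorem pacT_right {z : PacX} {M : ℤ} (hM : (z M).isDoor = true) (hz : ∀ j, M < j → z j = O) :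
    ∀ j, M < j → pacT z j = O := by
  intro j hj
  have z1 := hz j hj
  have z2 := hz (j + 1) (by omega)
  simp only [pacT, z1, z2]
  rcases eq_or_ne (j - 1) M with h | h
  · rw [h]
    revert hM
    cases z M <;> decide
  · rw [hz (j - 1) (by omega)]; rfl

theorem pacT_iterate_right {z : PacX} {M : ℤ} (hM : (z M).isDoor = true)
    (hz : ∀ j, M < j → z j = O) (t : ℕ) : ∀ j, M < j → pacT^[t] z j = O := by
  induction t with
  | zero => exact hz
  | succ t ih =>
    rw [Function.iterate_succ_apply']
    exact pacT_right (by rw [isDoor_iterate]; exact hM) ih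

theorem pacT_iterate_left {z : PacX} {lo : ℤ}
    (hz : ∀ j, j < lo → (z j = O ∨ z j = G ∨ z j = K)) (t : ℕ) :
    ∀ j, j < lo → (pacT^[t] z j = O ∨ pacT^[t] z j = G ∨ pacT^[t] z j = K) := by
  induction t with
  | zero => exact hz
  | succ t ih =>
    intro j hj
    rw [Function.iterate_succ_apply']
    exact pacRule_left _ (ih (j - 1) (by omega)) (ih j hj)

theorem pacT_iterate_update {z : PacX} {M : ℤ} (hM : (z M).isDoor = true)
    (hz : ∀ j, M < j → z j = O) (i : ℕ) :
    ∀ k : ℕ, pacT^[i] (Function.update z (M + 1 + k + i) K) =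
      Function.update (pacT^[i] z) (M + 1 + k) K := by
  induction i with
  | zero => simp
  | succ i ih =>
    intro k
    have h := ih (k + 1)
    rw [Function.iterate_succ_apply', Function.iterate_succ_apply',
      show M + 1 + (k : ℤ) + ((i + 1 : ℕ) : ℤ) = M + 1 + ((k + 1 : ℕ) : ℤ) + i by push_cast; ring, h,
      pacT_update (by rw [isDoor_iterate]; exact hM) (pacT_iterate_right hM hz i)
        (by push_cast; omega)]
    congr 1
    push_cast
    ring

/-- A configuration supported on `[lo, M]` with a door at `M` is eventually empty of particles on
`[lo, ∞)`. -/
theorem eventually_clean {dr : ℤ → Bool} {V : ℤ → ℤ} {lo M : ℤ} (hD : Doors dr V lo M) {z : PacX}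
    (hdr : ∀ j, (z j).isDoor = dr j) (hl : ∀ j, j < lo → z j = O) (hr : ∀ j, M < j → z j = O) :
    ∃ n : ℕ, ∀ t, n ≤ t → ∀ j, lo ≤ j → pacT^[t] z j = bg dr j := by
  have hM : (z M).isDoor = true := (hdr M).trans hD.last
  obtain ⟨B, hB⟩ := ((Set.finite_Icc lo M).image fun j => height V lo M (z j) j).bddAbove
  have hB' : ∀ j, (z j).isPart = true → height V lo M (z j) j ≤ B := by
    intro j hj
    refine hB ⟨j, ⟨?_, ?_⟩, rfl⟩
    · by_contra h
      simp [hl j (by omega), PacSym.isPart] at hj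
    · by_contra h
      simp [hr j (by omega), PacSym.isPart] at hj
  refine ⟨(B - lo + 1).toNat, fun t ht j hj => ?_⟩
  have hd : (pacT^[t] z j).isDoor = dr j := (isDoor_iterate z t j).trans (hdr j)
  have hp : (pacT^[t] z j).isPart = false := by
    by_contra h
    rw [Bool.not_eq_false] at h
    have hle := height_iterate_le hD hdr hB' t j h
    have hjM : j ≤ M := by
      by_contra hj'
      simp [pacT_iterate_right hM hr t j (by omega), PacSym.isPart] at h
    have hV := hD.nonneg j
    have h0 := hD.lo_neg
    have h1 := hD.M_pos
    have ht' : B - lo + 1 ≤ t := by omega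
    revert h hle
    cases pacT^[t] z j <;> simp [height, PacSym.isPart] <;> omega
  rw [bg, ← hd]
  revert hp
  cases pacT^[t] z j <;> simp [PacSym.isDoor, PacSym.isPart]

/-! ### Metric estimates -/

theorem pdist_nonneg (x y : PacX) : 0 ≤ pdist x y := by
  unfold pdist
  split_ifs <;> positivity

theorem pdist_le_one (x y : PacX) : pdist x y ≤ 1 := by
  unfold pdist
  split_ifs
  · exact zero_le_one
  · exact zpow_le_one_of_nonpos₀ (by norm_num) (by omega)

theorem pdist_eq_one {x y : PacX} (h : x 0 ≠ y 0) : pdist x y = 1 := by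
  have hne : x ≠ y := fun e => h (by rw [e])
  have h0 : sInf {n : ℕ | ∃ j : ℤ, j.natAbs = n ∧ x j ≠ y j} = 0 :=
    Nat.sInf_eq_zero.2 (.inl ⟨0, rfl, h⟩)
  rw [pdist, if_neg hne, h0]
  simp

theorem pdist_le {x y : PacX} (m : ℕ) (h : ∀ j : ℤ, -m ≤ j → j ≤ m → x j = y j) :
    pdist x y ≤ (2 : ℝ) ^ (-(m : ℤ)) := by
  unfold pdist
  split_ifs with hxy
  · positivity
  · refine zpow_le_zpow_right₀ (by norm_num) ?_
    have hne : {n : ℕ | ∃ j : ℤ, j.natAbs = n ∧ x j ≠ y j}.Nonempty := by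
      obtain ⟨j, hj⟩ := Function.ne_iff.1 hxy
      exact ⟨_, j, rfl, hj⟩
    obtain ⟨j, hj, hj'⟩ := Nat.sInf_mem hne
    rw [← hj]
    by_contra hlt
    exact hj' (h j (by omega) (by omega))

theorem pdiam_le_one (S : Set PacX) : pdiam S ≤ 1 := by
  refine Real.sSup_le ?_ zero_le_one
  rintro _ ⟨a, -, b, -, rfl⟩
  exact pdist_le_one a b

theorem pdist_le_pdiam {S : Set PacX} {a b : PacX} (ha : a ∈ S) (hb : b ∈ S) :
    pdist a b ≤ pdiam S := by
  refine le_csSup ⟨1, ?_⟩ ⟨a, ha, b, hb, rfl⟩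
  rintro _ ⟨a, -, b, -, rfl⟩
  exact pdist_le_one a b

theorem pdiam_nonneg (S : Set PacX) : 0 ≤ pdiam S := by
  refine Real.sSup_nonneg ?_
  rintro _ ⟨a, -, b, -, rfl⟩
  exact pdist_nonneg a b

/-- The image of every ball eventually has the maximal diameter `1`. -/
theorem eventually_diam (x : PacX) {δ : ℝ} (hδ : 0 < δ) :
    ∃ n : ℕ, ∀ t, n ≤ t → 1 ≤ pdiam (pacT^[t] '' pball x δ) := by
  obtain ⟨m, hm0, hm⟩ : ∃ m : ℕ, 0 < m ∧ (2 : ℝ) ^ (-(m : ℤ)) < δ := by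
    obtain ⟨m, hm⟩ := exists_pow_lt_of_lt_one hδ (show (2 : ℝ)⁻¹ < 1 by norm_num)
    refine ⟨m + 1, by omega, lt_of_le_of_lt ?_ hm⟩
    rw [zpow_neg, zpow_natCast, inv_pow]
    gcongr <;> norm_num
  have hball : ∀ y : PacX, (∀ j : ℤ, -m ≤ j → j ≤ m → x j = y j) → y ∈ pball x δ :=
    fun y hy => (pdist_le m hy).trans_lt hm
  -- The word of `x` on `[-m, m]`, followed by a single door.
  let z : PacX := fun j => if -m ≤ j ∧ j ≤ m then x j else if j = m + 1 then D else O
  have hzx : ∀ j : ℤ, -m ≤ j → j ≤ m → x j = z j := fun j h1 h2 => (if_pos ⟨h1, h2⟩).symm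
  have hl : ∀ j : ℤ, j < -m → z j = O := fun j hj => by
    simp only [z]; rw [if_neg (by omega), if_neg (by omega)]
  have hr : ∀ j : ℤ, m + 1 < j → z j = O := fun j hj => by
    simp only [z]; rw [if_neg (by omega), if_neg (by omega)]
  have hM : (z (m + 1)).isDoor = true := by
    simp only [z]; rw [if_neg (by omega)]; simp [PacSym.isDoor]
  obtain ⟨V, hD⟩ := Doors.exists (fun j => (z j).isDoor) (-m) (m + 1) (by omega) (by omega)
    (fun j hj => by
      by_contra h
      simp [hl j (by omega), PacSym.isDoor] at hj)
    (fun j hj => by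
      by_contra h
      simp [hr j (by omega), PacSym.isDoor] at hj) hM
  obtain ⟨n, hn⟩ := eventually_clean hD (fun _ => rfl) hl hr
  obtain ⟨c, hc⟩ := lone_reaches hD (height V (-m) (m + 1) K (m + 1 + 1) + 1).toNat (m + 1 + 1) K
    (by omega) ⟨rfl, by simp [hr (m + 1 + 1) (by omega), PacSym.isDoor], .inl rfl⟩ (by omega)
  refine ⟨n + c, fun t ht => ?_⟩
  obtain ⟨i, rfl⟩ : ∃ i, t = c + i := ⟨t - c, by omega⟩
  have hi : n ≤ i := by omega
  set y : PacX := Function.update z (m + 1 + 1 + i) K with hy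
  have hyx : ∀ j : ℤ, -m ≤ j → j ≤ m → x j = y j := fun j h1 h2 => by
    rw [hy, Function.update_of_ne (by omega)]
    exact hzx j h1 h2
  have hyi : pacT^[i] y = Function.update (pacT^[i] z) (m + 1 + 1) K := by
    simpa using pacT_iterate_update hM hr i 0
  have hlone : Lone (fun j => (z j).isDoor) (-m) (m + 1 + 1) K (pacT^[i] y) := by
    intro j
    rw [hyi, Function.update_apply]
    rcases lt_or_ge j (-m : ℤ) with hj | hj
    · left
      rw [if_neg (by omega)]
      exact ⟨hj, pacT_iterate_left (fun j hj => .inl (hl j hj)) i j hj⟩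
    · right
      rw [hn i hi j hj]
      exact ⟨hj, rfl⟩
  have h1 : (pacT^[c + i] y 0).isPart = true := by
    rw [Function.iterate_add_apply]
    exact hc _ hlone
  have h2 : (pacT^[c + i] z 0).isPart = false := by
    rw [hn (c + i) (by omega) 0 (by omega), bg]
    split_ifs <;> rfl
  have hne : pacT^[c + i] y 0 ≠ pacT^[c + i] z 0 := by
    intro h
    rw [h, h2] at h1
    exact Bool.false_ne_true h1
  rw [← pdist_eq_one hne]
  exact pdist_le_pdiam ⟨y, hball y hyx, rfl⟩ ⟨z, hball z hzx, rfl⟩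

/-- The Pacman cellular automaton is diam-mean sensitive. -/
theorem pacman_diam_mean_sensitive :
    ∃ ε > (0 : ℝ), ∀ x : PacX, ∀ δ > (0 : ℝ),
      Filter.limsup (fun n : ℕ =>
        (∑ i ∈ Finset.Icc 1 n, pdiam (pacT^[i] '' pball x δ)) / (n : ℝ)) Filter.atTop > ε := by
  refine ⟨1 / 4, by norm_num, fun x δ hδ => ?_⟩
  obtain ⟨N, hN⟩ := eventually_diam x hδ
  refine lt_of_lt_of_le (show (1 / 4 : ℝ) < 1 / 2 by norm_num) ?_
  refine Filter.le_limsup_of_frequently_le (Filter.Eventually.frequently ?_) ?_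
  · filter_upwards [Filter.eventually_ge_atTop (2 * N + 1)] with n hn
    have hn0 : (0 : ℝ) < n := by exact_mod_cast (by omega : 0 < n)
    rw [le_div_iff₀ hn0]
    -- All but the first `N` terms are at least `1`.
    calc (1 / 2 : ℝ) * n ≤ ((n - N : ℕ) : ℝ) := by
          rw [Nat.cast_sub (by omega)]
          have : (2 * N + 1 : ℝ) ≤ n := by exact_mod_cast hn
          linarith
      _ = ∑ i ∈ Finset.Icc (N + 1) n, (1 : ℝ) := by simp
      _ ≤ ∑ i ∈ Finset.Icc (N + 1) n, pdiam (pacT^[i] '' pball x δ) :=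
          Finset.sum_le_sum fun i hi => hN i (by have := (Finset.mem_Icc.1 hi).1; omega)
      _ ≤ ∑ i ∈ Finset.Icc 1 n, pdiam (pacT^[i] '' pball x δ) :=
          Finset.sum_le_sum_of_subset_of_nonneg (Finset.Icc_subset_Icc_left (by omega))
            fun i _ _ => pdiam_nonneg _
  · refine Filter.isBoundedUnder_of ⟨1, fun n => ?_⟩
    refine div_le_one_of_le₀ ?_ (Nat.cast_nonneg n)
    calc ∑ i ∈ Finset.Icc 1 n, pdiam (pacT^[i] '' pball x δ)
        ≤ ∑ i ∈ Finset.Icc 1 n, (1 : ℝ) := Finset.sum_le_sum fun i _ => pdiam_le_one _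
      _ = n := by simp
end

section
/- Let (X,T) be the Pacman cellular automaton, let w be a finite word over A, and for each i > 0 define x^i = ... 0 0 . w D 0^i K 0 0 ... (that is, x^i_j = w_j for 0 ≤ j ≤ |w| − 1, x^i_{|w|} = D, x^i_{|w|+1+i} = K, and x^i_j = 0 for all other j ∈ ℤ, where 0 = empty space, D = empty door, K = keymaster ghost). Then there exist N, M ≥ 0 such that for every j ≥ 0, the zeroth coordinate satisfies T^{N+j} x^{M+j}_0 ∈ {G, K, E}. -/
open PacSym

instance : Fintype PacSym := ⟨{O, D, P, G, K, E}, by intro x; cases x <;> decide⟩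

/-! ### Local facts about the rule -/

set_option maxRecDepth 10000

lemma rule_door (a b c : PacSym) :
    (pacRule a b c = D ∨ pacRule a b c = E) ↔ (b = D ∨ b = E) := by
  revert a b c; decide

lemma rule_G (a b c : PacSym) : pacRule a b c = G → c = G ∨ c = E := by
  revert a b c; decide

lemma rule_P (a b c : PacSym) : pacRule a b c = P → a = P ∨ b = G ∨ c = G := by
  revert a b c; decide

lemma rule_K (a b c : PacSym) : pacRule a b c = K → c = K ∨ a = P ∨ b = P := by
  revert a b c; decide

lemma rule_E (a b c : PacSym) : pacRule a b c = E → c = K ∨ c = E := by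
  revert a b c; decide

lemma rule_ghosts (a b c : PacSym) : (a = O ∨ a = G ∨ a = K) → (b = O ∨ b = G ∨ b = K) →
    (pacRule a b c = O ∨ pacRule a b c = G ∨ pacRule a b c = K) := by
  revert a b c; decide

lemma rule_calm (a b c : PacSym) : a ≠ P → (b = O ∨ b = D) → (c = O ∨ c = D) →
    pacRule a b c = b := by
  revert a b c; decide

/-! ### Static doors and clearing -/

lemma iter_succ (x : PacX) (t : ℕ) (i : ℤ) :
    (pacT^[t + 1] x) i =
      pacRule ((pacT^[t] x) (i - 1)) ((pacT^[t] x) i) ((pacT^[t] x) (i + 1)) := by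
  rw [Function.iterate_succ_apply']; rfl

lemma door_iter (x : PacX) (t : ℕ) (i : ℤ) :
    ((pacT^[t] x) i = D ∨ (pacT^[t] x) i = E) ↔ (x i = D ∨ x i = E) := by
  induction t with
  | zero => rfl
  | succ t ih => rw [iter_succ, rule_door, ih]

/-- From some time on, all cells at positions `≥ d` are empty spaces or empty doors. -/
def Clears (x : PacX) (d : ℤ) : Prop :=
  ∃ t₀ : ℕ, ∀ t ≥ t₀, ∀ i ≥ d, (pacT^[t] x) i = O ∨ (pacT^[t] x) i = D

/-- A doorless gap `(l, d)` with clear cells from `d` on, and with no pacman ever entering at `l`,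
loses its ghosts, then its pacmen, then its keymasters. -/
lemma gap_clears (x : PacX) (l d : ℤ) (hd : Clears x d)
    (hgap : ∀ i, l < i → i < d → ¬ (x i = D ∨ x i = E))
    (hl : ∀ t, (pacT^[t] x) l ≠ P) : Clears x (l + 1) := by
  obtain ⟨t₀, h₀⟩ := hd
  obtain ⟨n, hn⟩ : ∃ n : ℕ, d - l ≤ n := ⟨(d - l).toNat, by omega⟩
  have hgap' : ∀ t i, l < i → i < d → (pacT^[t] x) i ≠ D ∧ (pacT^[t] x) i ≠ E := by
    intro t i h1 h2
    have := hgap i h1 h2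
    rw [← door_iter x t i] at this
    tauto
  have hG : ∀ k : ℕ, ∀ t ≥ t₀ + k, ∀ i, l < i → d - k ≤ i → (pacT^[t] x) i ≠ G := by
    intro k
    induction k with
    | zero =>
      intro t ht i _ hi h
      rcases h₀ t (by omega) i (by push_cast at hi; omega) with h' | h' <;> simp [h'] at h
    | succ k ih =>
      intro t ht i hli hi h
      obtain ⟨s, rfl⟩ : ∃ s, t = s + 1 := ⟨t - 1, by omega⟩
      rw [iter_succ] at h
      have h3 := ih s (by omega) (i + 1) (by omega) (by push_cast at hi; omega)
      rcases rule_G _ _ _ h with h | h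
      · exact h3 h
      · by_cases hid : i + 1 < d
        · exact (hgap' s (i + 1) (by omega) hid).2 h
        · rcases h₀ s (by omega) (i + 1) (by omega) with h' | h' <;> simp [h'] at h
  have hG' : ∀ t ≥ t₀ + n, ∀ i, l < i → (pacT^[t] x) i ≠ G := fun t ht i hi =>
    hG n t ht i hi (by omega)
  have hP : ∀ k : ℕ, ∀ t ≥ t₀ + n + k, ∀ i, l ≤ i → i ≤ l + k → (pacT^[t] x) i ≠ P := by
    intro k
    induction k with
    | zero =>
      intro t ht i h1 h2
      obtain rfl : i = l := by push_cast at h2; omega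
      exact hl t
    | succ k ih =>
      intro t ht i h1 h2 h
      rcases eq_or_lt_of_le h1 with rfl | h1
      · exact hl t h
      obtain ⟨s, rfl⟩ : ∃ s, t = s + 1 := ⟨t - 1, by omega⟩
      rw [iter_succ] at h
      rcases rule_P _ _ _ h with h | h | h
      · exact ih s (by omega) (i - 1) (by omega) (by push_cast at h2; omega) h
      · exact hG' s (by omega) i h1 h
      · exact hG' s (by omega) (i + 1) (by omega) h
  have hP' : ∀ t ≥ t₀ + n + n, ∀ i, l ≤ i → (pacT^[t] x) i ≠ P := by
    intro t ht i hi h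
    by_cases hid : i < d
    · exact hP n t ht i hi (by omega) h
    · rcases h₀ t (by omega) i (by omega) with h' | h' <;> simp [h'] at h
  have hK : ∀ k : ℕ, ∀ t ≥ t₀ + n + n + k, ∀ i, l < i → d - k ≤ i → (pacT^[t] x) i ≠ K := by
    intro k
    induction k with
    | zero =>
      intro t ht i _ hi h
      rcases h₀ t (by omega) i (by push_cast at hi; omega) with h' | h' <;> simp [h'] at h
    | succ k ih =>
      intro t ht i hli hi h
      obtain ⟨s, rfl⟩ : ∃ s, t = s + 1 := ⟨t - 1, by omega⟩
      rw [iter_succ] at h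
      rcases rule_K _ _ _ h with h | h | h
      · exact ih s (by omega) (i + 1) (by omega) (by push_cast at hi; omega) h
      · exact hP' s (by omega) (i - 1) (by omega) h
      · exact hP' s (by omega) i (by omega) h
  refine ⟨t₀ + n + n + n, fun t ht i hi => ?_⟩
  by_cases hid : i < d
  · have h1 := hG' t (by omega) i (by omega)
    have h2 := hP' t (by omega) i (by omega)
    have h3 := hK n t ht i (by omega) (by omega)
    have h4 := hgap' t i (by omega) hid
    cases h : (pacT^[t] x) i <;> simp_all
  · exact h₀ t (by omega) i (by omega)

/-- The door at `l` receives nothing from the clear cells on its right. -/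
lemma door_clears (x : PacX) (l : ℤ) (hl : x l = D ∨ x l = E) (h : Clears x (l + 1)) :
    Clears x l := by
  obtain ⟨t₀, h₀⟩ := h
  refine ⟨t₀ + 1, fun t ht i hi => ?_⟩
  rcases eq_or_lt_of_le hi with rfl | hi
  · right
    rcases (door_iter x t l).2 hl with h | h
    · exact h
    · exfalso
      obtain ⟨s, rfl⟩ : ∃ s, t = s + 1 := ⟨t - 1, by omega⟩
      rw [iter_succ] at h
      have h1 := rule_E _ _ _ h
      rcases h₀ s (by omega) (l + 1) le_rfl with h' | h' <;> simp [h'] at h1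
  · exact h₀ t (by omega) i (by omega)

lemma neg_ghosts (x : PacX) (hx : ∀ i < 0, x i = O ∨ x i = G ∨ x i = K) (t : ℕ) :
    ∀ i < 0, (pacT^[t] x) i = O ∨ (pacT^[t] x) i = G ∨ (pacT^[t] x) i = K := by
  induction t with
  | zero => exact hx
  | succ t ih =>
    intro i hi
    rw [iter_succ]
    exact rule_ghosts _ _ _ (ih _ (by omega)) (ih _ hi)

lemma last_door (x : PacX) (d : ℕ) :
    (∀ i : ℤ, -1 < i → i < d → ¬ (x i = D ∨ x i = E)) ∨
    ∃ l : ℕ, l < d ∧ (x l = D ∨ x l = E) ∧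
      ∀ i : ℤ, l < i → i < d → ¬ (x i = D ∨ x i = E) := by
  induction d with
  | zero => left; intro i h1 h2; push_cast at h2; omega
  | succ d ih =>
    by_cases h : x d = D ∨ x d = E
    · right
      refine ⟨d, by omega, h, fun i h1 h2 => ?_⟩
      push_cast at h2; omega
    · rcases ih with ih | ⟨l, h1, h2, h3⟩
      · left
        intro i hi hi'
        rcases eq_or_ne i d with rfl | hne
        · exact h
        · exact ih i hi (by push_cast at hi'; omega)
      · right
        refine ⟨l, by omega, h2, fun i hi hi' => ?_⟩
        rcases eq_or_ne i d with rfl | hne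
        · exact h
        · exact h3 i hi (by push_cast at hi'; omega)

lemma clear_all (x : PacX) (hx : ∀ i < 0, x i = O ∨ x i = G ∨ x i = K) (d : ℕ)
    (hd : Clears x d) : Clears x 0 := by
  induction d using Nat.strong_induction_on with
  | _ d ih =>
    rcases last_door x d with h | ⟨l, h1, h2, h3⟩
    · refine gap_clears x (-1) d hd h fun t ht => ?_
      have := neg_ghosts x hx t (-1) (by omega)
      simp [ht] at this
    · refine ih l h1 (door_clears x l h2 (gap_clears x l d hd h3 fun t ht => ?_))
      have := (door_iter x t l).2 h2
      simp [ht] at this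

/-! ### A single ghost crossing a cleared configuration -/

/-- `z` has the static doors `b` on `[0, ∞)` except for the letter `q` at `p`, and no doors or
pacmen on the negative side. -/
def Single (b : PacX) (p : ℤ) (q : PacSym) (z : PacX) : Prop :=
  (∀ i, 0 ≤ i → z i = if i = p then q else b i) ∧ ∀ i < 0, z i = O ∨ z i = G ∨ z i = K

/-- A letter `q` starting at `p` produces a ghost at `0` after a time depending only on
`b`, `p` and `q`, not on the negative cells. -/
def Hits (b : PacX) (p : ℤ) (q : PacSym) : Prop :=
  ∃ τ : ℕ, ∀ z, Single b p q z → (pacT^[τ] z) 0 ∈ ({G, K, E} : Set PacSym)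

lemma Hits.of_step {b : PacX} {p p' : ℤ} {q q' : PacSym} (h : Hits b p' q')
    (hs : ∀ z, Single b p q z → Single b p' q' (pacT z)) : Hits b p q := by
  obtain ⟨τ, hτ⟩ := h
  exact ⟨τ + 1, fun z hz => by
    rw [Function.iterate_succ_apply]; exact hτ _ (hs z hz)⟩

lemma Hits.zero {b : PacX} {q : PacSym} (hq : q = G ∨ q = K ∨ q = E) : Hits b 0 q :=
  ⟨0, fun z hz => by
    have := hz.1 0 le_rfl
    simp only [Function.iterate_zero, id, this]
    simpa using hq⟩

/-- Reduction of a one-step transition to the three cells around the particle. The letter `a`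
stands for the cell `p - 2`, which may lie on the negative side. -/
lemma single_step {b : PacX} (hb : ∀ i, b i = O ∨ b i = D) (hb0 : ∀ i < 0, b i = O)
    {p p' : ℤ} {q q' : PacSym} (hp : 1 ≤ p) (hp' : p' = p - 1 ∨ p' = p ∨ p' = p + 1)
    (h1 : ∀ a, a ≠ P → a ≠ E → (a = D ↔ b (p - 2) = D) →
      pacRule a (b (p - 1)) q = if p' = p - 1 then q' else b (p - 1))
    (h2 : pacRule (b (p - 1)) q (b (p + 1)) = if p' = p then q' else b p)
    (h3 : pacRule q (b (p + 1)) (b (p + 2)) = if p' = p + 1 then q' else b (p + 1))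
    (z : PacX) (hz : Single b p q z) : Single b p' q' (pacT z) := by
  obtain ⟨hz1, hz2⟩ := hz
  have hzb : ∀ i, 0 ≤ i → i ≠ p → z i = b i := fun i h h' => by rw [hz1 i h, if_neg h']
  have hzp : z p = q := by rw [hz1 p (by omega), if_pos rfl]
  have hzP : ∀ i, i ≠ p → z i ≠ P ∧ z i ≠ E ∧ (z i = D ↔ b i = D) := by
    intro i hi
    by_cases h0 : 0 ≤ i
    · rw [hzb i h0 hi]
      rcases hb i with h | h <;> simp [h]
    · rcases hz2 i (by omega) with h | h | h <;> simp [h, hb0 i (by omega)]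
  refine ⟨fun i hi => ?_, fun i hi =>
    rule_ghosts _ _ _ (hz2 _ (by omega)) (hz2 _ hi)⟩
  change pacRule (z (i - 1)) (z i) (z (i + 1)) = _
  by_cases hi1 : i = p - 1
  · subst hi1
    have hh := hzP (p - 2) (by omega)
    rw [show p - 1 - 1 = p - 2 by ring, show p - 1 + 1 = p by ring, hzp,
      hzb (p - 1) hi (by omega), h1 _ hh.1 hh.2.1 hh.2.2]
    simp only [eq_comm]
  by_cases hi2 : i = p
  · subst hi2
    rw [hzp, hzb (i - 1) (by omega) (by omega), hzb (i + 1) (by omega) (by omega), h2]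
    simp only [eq_comm]
  by_cases hi3 : i = p + 1
  · subst hi3
    rw [show p + 1 - 1 = p by ring, show p + 1 + 1 = p + 2 by ring, hzp,
      hzb (p + 1) (by omega) (by omega), hzb (p + 2) (by omega) (by omega), h3]
    simp only [eq_comm]
  rw [if_neg (by omega), hzb i hi hi2, hzb (i + 1) (by omega) (by omega)]
  exact rule_calm _ _ _ (hzP _ (by omega)).1 (hb _) (hb _)

/-- The next letter of an empty space or empty door whose right neighbour is the particle `q`. -/
lemma a_facts (a : PacSym) (q : PacSym) (h1 : a ≠ P) (h2 : a ≠ E) :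
    (q = K → pacRule a O q = K) ∧ (q = K → pacRule a D q = E) ∧
    (q = E → pacRule a O q = G) ∧ (q = E → pacRule a D q = E) ∧
    (q = G → a = D → pacRule a O q = P) ∧ (q = G → a ≠ D → pacRule a O q = G) ∧
    (q = G → pacRule a D q = D) ∧ (q = P → pacRule a O q = O) ∧
    (q = P → pacRule a D q = D) := by
  revert a q; decide

lemma hits_K {b : PacX} (hb : ∀ i, b i = O ∨ b i = D) (hb0 : ∀ i < 0, b i = O) (m : ℕ)
    (ih : ∀ k < m, b k = D → Hits b k E) (p : ℕ) (hpm : p ≤ m) (hp : b p = O) :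
    Hits b p K := by
  induction p with
  | zero => exact Hits.zero (by simp)
  | succ p ihp =>
    have e : ((p + 1 : ℕ) : ℤ) - 1 = p := by push_cast; ring
    rcases hb p with h | h
    · refine (ihp (by omega) h).of_step (single_step hb hb0 (by omega) (by omega) ?_ ?_ ?_)
      · intro a h1 h2 _
        rw [e, h, if_pos rfl]
        exact (a_facts a K h1 h2).1 rfl
      · rw [e, h, hp, if_neg (by omega)]
        rcases hb ((p + 1 : ℕ) + 1) with h' | h' <;> rw [h'] <;> decide
      · rw [if_neg (by omega)]
        exact rule_calm _ _ _ (by decide) (hb _) (hb _)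
    · refine (ih p (by omega) h).of_step (single_step hb hb0 (by omega) (by omega) ?_ ?_ ?_)
      · intro a h1 h2 _
        rw [e, h, if_pos rfl]
        exact (a_facts a K h1 h2).2.1 rfl
      · rw [e, h, hp, if_neg (by omega)]
        rcases hb ((p + 1 : ℕ) + 1) with h' | h' <;> rw [h'] <;> decide
      · rw [if_neg (by omega)]
        exact rule_calm _ _ _ (by decide) (hb _) (hb _)

/-- A pacman to the left of the door `m` runs into it and comes back as a keymaster. -/
lemma hits_P {b : PacX} (hb : ∀ i, b i = O ∨ b i = D) (hb0 : ∀ i < 0, b i = O) (m : ℕ)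
    (hm : b m = D) (ih : ∀ k < m, b k = D → Hits b k E) (n : ℕ) :
    ∀ p : ℕ, 1 ≤ p → p + n + 1 = m → (∀ i : ℕ, p ≤ i → i < m → b i = O) → Hits b p P := by
  induction n with
  | zero =>
    intro p hp hpm hO
    have hp0 := hO p le_rfl (by omega)
    have e : (p : ℤ) + 1 = m := by omega
    refine (hits_K hb hb0 m ih p (by omega) hp0).of_step
      (single_step hb hb0 (by omega) (by omega) ?_ ?_ ?_)
    · intro a h1 h2 _
      rw [if_neg (by omega)]
      rcases hb (p - 1) with h | h <;> rw [h]
      · exact (a_facts a P h1 h2).2.2.2.2.2.2.2.1 rfl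
      · exact (a_facts a P h1 h2).2.2.2.2.2.2.2.2 rfl
    · rw [e, hm, if_pos rfl]
      rcases hb (p - 1) with h | h <;> rw [h] <;> decide
    · rw [e, hm, if_neg (by omega)]
      rcases hb (p + 2) with h | h <;> rw [h] <;> decide
  | succ n ihn =>
    intro p hp hpm hO
    have hp0 := hO p le_rfl (by omega)
    have hp1 := hO (p + 1) (by omega) (by omega)
    have e1 : (p : ℤ) + 1 = (p + 1 : ℕ) := by push_cast; ring
    have left : ∀ (p' : ℤ) (q' : PacSym), p' = p + 1 → ∀ a, a ≠ P → a ≠ E →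
        (a = D ↔ b (p - 2) = D) →
        pacRule a (b (p - 1)) P = if p' = p - 1 then q' else b (p - 1) := by
      intro p' q' hp' a h1 h2 _
      rw [if_neg (by omega)]
      rcases hb (p - 1) with h | h <;> rw [h]
      · exact (a_facts a P h1 h2).2.2.2.2.2.2.2.1 rfl
      · exact (a_facts a P h1 h2).2.2.2.2.2.2.2.2 rfl
    have mid : ∀ (p' : ℤ) (q' : PacSym), p' = p + 1 →
        pacRule (b (p - 1)) P (b (p + 1)) = if p' = p then q' else b p := by
      intro p' q' hp'
      rw [if_neg (by omega), e1, hp1, hp0]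
      rcases hb (p - 1) with h | h <;> rw [h] <;> decide
    -- The pacman turns into a keymaster already when the door is two cells ahead.
    cases n with
    | zero =>
      have e2 : (p : ℤ) + 2 = m := by omega
      refine (hits_K hb hb0 m ih (p + 1) (by omega) hp1).of_step
        (single_step hb hb0 (by omega) (by omega) (left _ _ (by omega)) (mid _ _ (by omega)) ?_)
      rw [if_pos (by omega), e2, hm, e1, hp1]
      decide
    | succ n =>
      have hp2 := hO (p + 2) (by omega) (by omega)
      have e2 : (p : ℤ) + 2 = (p + 2 : ℕ) := by push_cast; ring
      refine (ihn (p + 1) (by omega) (by omega) fun i h1 h2 => hO i (by omega) h2).of_step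
        (single_step hb hb0 (by omega) (by omega) (left _ _ (by omega)) (mid _ _ (by omega)) ?_)
      rw [if_pos (by omega), e2, hp2, e1, hp1]
      decide

/-- A ghost that left the door `m` reaches cell `0` or bounces off the next door. -/
lemma hits_G {b : PacX} (hb : ∀ i, b i = O ∨ b i = D) (hb0 : ∀ i < 0, b i = O) (m : ℕ)
    (hm : b m = D) (ih : ∀ k < m, b k = D → Hits b k E) (p : ℕ) (hpm : p < m)
    (hO : ∀ i : ℕ, p ≤ i → i < m → b i = O) : Hits b p G := by
  induction p with
  | zero => exact Hits.zero (by simp)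
  | succ p ihp =>
    have e : ((p + 1 : ℕ) : ℤ) - 1 = p := by push_cast; ring
    have hp0 := hO (p + 1) le_rfl hpm
    have right : ∀ (p' : ℤ) (q' : PacSym), p' ≤ (p + 1 : ℕ) →
        pacRule G (b ((p + 1 : ℕ) + 1)) (b ((p + 1 : ℕ) + 2)) =
          if p' = (p + 1 : ℕ) + 1 then q' else b ((p + 1 : ℕ) + 1) := by
      intro p' q' hp'
      rw [if_neg (by omega)]
      exact rule_calm _ _ _ (by decide) (hb _) (hb _)
    rcases hb p with h | h
    · have hO' : ∀ i : ℕ, p ≤ i → i < m → b i = O := by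
        intro i h1 h2
        rcases eq_or_lt_of_le h1 with rfl | h1
        · exact h
        · exact hO i h1 h2
      have mid : ∀ (p' : ℤ) (q' : PacSym), p' = p →
          pacRule (b ((p + 1 : ℕ) - 1)) G (b ((p + 1 : ℕ) + 1)) =
            if p' = (p + 1 : ℕ) then q' else b (p + 1 : ℕ) := by
        intro p' q' hp'
        rw [if_neg (by omega), e, h, hp0]
        rcases hb ((p + 1 : ℕ) + 1) with h' | h' <;> rw [h'] <;> decide
      rcases hb ((p + 1 : ℕ) - 2) with h2 | h2
      · refine (ihp (by omega) hO').of_step (single_step hb hb0 (by omega) (by omega) ?_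
          (mid _ _ rfl) (right _ _ (by omega)))
        intro a ha1 ha2 ha
        rw [h2] at ha
        rw [e, h, if_pos rfl]
        exact (a_facts a G ha1 ha2).2.2.2.2.2.1 rfl (fun h' => by simp [h'] at ha)
      · have hp1 : 1 ≤ p := by
          by_contra hlt
          rw [hb0 _ (by omega)] at h2
          simp at h2
        refine (hits_P hb hb0 m hm ih (m - p - 1) p hp1 (by omega) hO').of_step
          (single_step hb hb0 (by omega) (by omega) ?_ (mid _ _ rfl) (right _ _ (by omega)))
        intro a ha1 ha2 ha
        rw [e, h, if_pos rfl]
        exact (a_facts a G ha1 ha2).2.2.2.2.1 rfl (ha.2 h2)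
    · refine (hits_P hb hb0 m hm ih (m - (p + 1) - 1) (p + 1) (by omega) (by omega) hO).of_step
          (single_step hb hb0 (by omega) (by omega) ?_ ?_ (right _ _ (by omega)))
      · intro a ha1 ha2 _
        rw [e, h, if_neg (by omega)]
        exact (a_facts a G ha1 ha2).2.2.2.2.2.2.1 rfl
      · rw [e, h, if_pos rfl]
        rcases hb ((p + 1 : ℕ) + 1) with h' | h' <;> rw [h'] <;> decide

lemma hits_E {b : PacX} (hb : ∀ i, b i = O ∨ b i = D) (hb0 : ∀ i < 0, b i = O) (m : ℕ)
    (hm : b m = D) : Hits b m E := by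
  induction m using Nat.strong_induction_on with
  | _ m ih =>
    cases m with
    | zero => exact Hits.zero (by simp)
    | succ m =>
      have e : ((m + 1 : ℕ) : ℤ) - 1 = m := by push_cast; ring
      have right : ∀ (p' : ℤ) (q' : PacSym), p' = m →
          pacRule E (b ((m + 1 : ℕ) + 1)) (b ((m + 1 : ℕ) + 2)) =
            if p' = (m + 1 : ℕ) + 1 then q' else b ((m + 1 : ℕ) + 1) := by
        intro p' q' hp'
        rw [if_neg (by omega)]
        exact rule_calm _ _ _ (by decide) (hb _) (hb _)
      have mid : ∀ (p' : ℤ) (q' : PacSym), p' = m →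
          pacRule (b ((m + 1 : ℕ) - 1)) E (b ((m + 1 : ℕ) + 1)) =
            if p' = (m + 1 : ℕ) then q' else b (m + 1 : ℕ) := by
        intro p' q' hp'
        rw [if_neg (by omega), hm]
        rcases hb ((m + 1 : ℕ) - 1) with h | h <;>
          rcases hb ((m + 1 : ℕ) + 1) with h' | h' <;> rw [h, h'] <;> decide
      rcases hb m with h | h
      · refine (hits_G hb hb0 (m + 1) hm ih m (by omega) fun i h1 h2 => ?_).of_step
          (single_step hb hb0 (by omega) (by omega) ?_ (mid _ _ rfl) (right _ _ rfl))
        · obtain rfl : i = m := by omega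
          exact h
        · intro a ha1 ha2 _
          rw [e, h, if_pos rfl]
          exact (a_facts a E ha1 ha2).2.2.1 rfl
      · refine (ih m (by omega) h).of_step
          (single_step hb hb0 (by omega) (by omega) ?_ (mid _ _ rfl) (right _ _ rfl))
        intro a ha1 ha2 _
        rw [e, h, if_pos rfl]
        exact (a_facts a E ha1 ha2).2.2.2.1 rfl

/-! ### The approach of the keymaster -/

lemma y_right (w : List PacSym) (t : ℕ) :
    (pacT^[t] (yPt w)) w.length = D ∧ ∀ i > (w.length : ℤ), (pacT^[t] (yPt w)) i = O := by
  induction t with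
  | zero =>
    refine ⟨by simp [yPt], fun i hi => ?_⟩
    have h1 : ¬ i < (w.length : ℤ) := by omega
    have h2 : i ≠ (w.length : ℤ) := by omega
    simp [yPt, h1, h2]
  | succ t ih =>
    obtain ⟨hD, hO⟩ := ih
    refine ⟨?_, fun i hi => ?_⟩
    · rw [iter_succ, hD, hO (w.length + 1) (by omega)]
      generalize (pacT^[t] (yPt w)) _ = a
      revert a; decide
    · rw [iter_succ, hO i hi, hO (i + 1) (by omega)]
      refine rule_calm _ _ _ ?_ (by simp) (by simp)
      rcases eq_or_ne (i - 1) w.length with h | h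
      · rw [h, hD]; decide
      · rw [hO _ (by omega)]; decide

lemma approach (w : List PacSym) (n t : ℕ) (ht : t ≤ n) :
    pacT^[t] (xPt w n) =
      Function.update (pacT^[t] (yPt w)) ((w.length : ℤ) + 1 + n - t) K := by
  induction t with
  | zero =>
    funext i
    by_cases hi : i = (w.length : ℤ) + 1 + n
    · have h1 : ¬ i < (w.length : ℤ) := by omega
      have h2 : i ≠ (w.length : ℤ) := by omega
      subst hi
      simp only [Function.iterate_zero, id, Nat.cast_zero, sub_zero, Function.update_self]
      simp only [xPt, h1, h2, and_false, if_false, if_true]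
    · simp [Function.update, hi, xPt, yPt]
  | succ t ih =>
    have ih := ih (by omega)
    obtain ⟨hD, hO⟩ := y_right w t
    funext i
    rw [iter_succ, ih]
    set p : ℤ := (w.length : ℤ) + 1 + n - t with hp
    have hpL : p > (w.length : ℤ) + 1 := by omega
    have hp' : (w.length : ℤ) + 1 + n - (t + 1 : ℕ) = p - 1 := by push_cast; omega
    rw [hp']
    have hne : ∀ j, j ≠ p → Function.update (pacT^[t] (yPt w)) p K j = (pacT^[t] (yPt w)) j :=
      fun j hj => Function.update_of_ne hj _ _
    by_cases h1 : i = p - 1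
    · subst h1
      rw [Function.update_self, hne (p - 1) (by omega), hne (p - 1 - 1) (by omega),
        show p - 1 + 1 = p by ring, Function.update_self, hO (p - 1) (by omega)]
      rcases eq_or_ne (p - 1 - 1) w.length with h | h
      · rw [h, hD]; decide
      · rw [hO _ (by omega)]; decide
    rw [Function.update_of_ne h1, iter_succ]
    by_cases h2 : i = p
    · subst h2
      rw [Function.update_self, hne (p - 1) (by omega), hne (p + 1) (by omega),
        hO (p - 1) (by omega), hO (p + 1) (by omega), hO p (by omega)]
      decide
    by_cases h3 : i = p + 1
    · subst h3
      rw [show p + 1 - 1 = p by ring, Function.update_self, hne (p + 1) (by omega),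
        hne (p + 1 + 1) (by omega), hO p (by omega), hO (p + 1) (by omega),
        hO (p + 1 + 1) (by omega)]
      decide
    rw [hne _ (by omega), hne _ (by omega), hne _ (by omega)]

/-- Lemma: for `x^i = ⋯0.w D 0^i K 0⋯` there are `N, M ≥ 0` such that for every `j ≥ 0`
the zeroth coordinate of `T^{N+j} x^{M+j}` is a ghost, keymaster ghost, or door with ghost. -/
theorem pacman_ghost_hits_zero (w : List PacSym) :
    ∃ N M : ℕ, ∀ j : ℕ,
      (pacT^[N + j] (xPt w (M + j))) 0 ∈ ({G, K, E} : Set PacSym) := by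
  have hneg : ∀ i < 0, yPt w i = O := by
    intro i hi
    have h1 : ¬ 0 ≤ i := by omega
    have h2 : i ≠ (w.length : ℤ) := by omega
    simp [yPt, h1, h2]
  have hclear : Clears (yPt w) w.length := by
    refine ⟨0, fun t _ i hi => ?_⟩
    rcases eq_or_lt_of_le hi with rfl | hi
    · exact Or.inr (y_right w t).1
    · exact Or.inl ((y_right w t).2 i hi)
  obtain ⟨t₀, h₀⟩ := clear_all (yPt w) (fun i hi => Or.inl (hneg i hi)) _ hclear
  -- The cleared configuration: the doors of `y`, all empty.
  set b : PacX := fun i => if yPt w i = D ∨ yPt w i = E then D else O with hbdef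
  have hb : ∀ i, b i = O ∨ b i = D := by
    intro i
    simp only [hbdef]
    split_ifs <;> simp
  have hb0 : ∀ i < 0, b i = O := by
    intro i hi
    simp [hbdef, hneg i hi]
  have hbL : b w.length = D := by simp [hbdef, yPt]
  have hbR : b (w.length + 1 : ℕ) = O := by
    have := (y_right w 0).2 (w.length + 1 : ℕ) (by push_cast; omega)
    simp only [Function.iterate_zero, id] at this
    simp only [hbdef, this]
    decide
  have hyb : ∀ t ≥ t₀, ∀ i ≥ 0, (pacT^[t] (yPt w)) i = b i := by
    intro t ht i hi
    have h1 := door_iter (yPt w) t i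
    simp only [hbdef]
    rcases h₀ t ht i hi with h | h
    · rw [if_neg (by rw [← h1, h]; decide), h]
    · rw [if_pos (by rw [← h1, h]; decide), h]
  obtain ⟨τ, hτ⟩ := hits_K hb hb0 (w.length + 1) (fun k _ hk => hits_E hb hb0 k hk)
    (w.length + 1) le_rfl hbR
  refine ⟨τ + t₀, t₀, fun j => ?_⟩
  rw [add_assoc, Function.iterate_add_apply, approach w (t₀ + j) (t₀ + j) le_rfl]
  refine hτ _ ⟨fun i hi => ?_, fun i hi => ?_⟩
  · rw [show (w.length : ℤ) + 1 + (t₀ + j : ℕ) - (t₀ + j : ℕ) = (w.length + 1 : ℕ) by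
      push_cast; ring, Function.update_apply, hyb _ (by omega) i hi]
  · rw [Function.update_of_ne (by omega)]
    exact neg_ghosts _ (fun i hi => Or.inl (hneg i hi)) _ i hi
end
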